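/- arXiv:1810.13000 — 2 statements merged into one kernel-verified Lean document; each statement's English description precedes it below -/
import Mathlib

section
/- For every composition λ = (λ_1,…,λ_r), the value f(λ) of the recursive function f equals the number of orbits of the permutation T_λ, i.e. f(λ) = γ(T_λ). -/
/-- A composition: a nonempty list of positive integers. -/
def IsComposition (l : List ℕ) : Prop := l ≠ [] ∧ ∀ x ∈ l, 0 < x

/-- The `i`-th translation parameter (0-indexed):
`s_i = (sum of parts after position i) - (sum of parts before position i)`. -/
def transParam (l : List ℕ) (i : ℕ) : ℤ :=
  ((l.drop (i + 1)).sum : ℤ) - ((l.take i).sum : ℤ)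

/-- The symmetric discrete interval exchange associated to `l`, as a map `ℤ → ℤ`
(acting on `{1, …, n}`, identity elsewhere): `x ∈ B_i` is sent to `x + s_i`. -/
def Texch (l : List ℕ) (x : ℤ) : ℤ :=
  x + ∑ i ∈ Finset.range l.length,
    (if ((l.take i).sum : ℤ) < x ∧ x ≤ ((l.take (i + 1)).sum : ℤ) then transParam l i else 0)

/-- The orbit of `x` under `T_l`. -/
def orbit (l : List ℕ) (x : ℤ) : Set ℤ := {y | ∃ k : ℕ, (Texch l)^[k] x = y}

/-- The set of orbits of `T_l` on `{1, …, n}`. -/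
def orbitsSet (l : List ℕ) : Set (Set ℤ) :=
  {S | ∃ x : ℤ, 1 ≤ x ∧ x ≤ (l.sum : ℤ) ∧ S = orbit l x}

/-- The number of orbits `γ(T_l)` of `T_l` on `{1, …, n}`. -/
noncomputable def numOrbits (l : List ℕ) : ℕ := (orbitsSet l).ncard

private lemma eraseIdx_sum_aux (l : List ℕ) (t : ℕ) (ht : t < l.length) :
    (l.eraseIdx t).sum + l.getD t 0 = l.sum := by
  induction l generalizing t with
  | nil => simp at ht
  | cons a l ih =>
    cases t with
    | zero => simp [List.eraseIdx, Nat.add_comm]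
    | succ t =>
      simp only [List.eraseIdx, List.sum_cons, List.getD_cons_succ]
      have := ih t (by simpa using Nat.lt_of_succ_lt_succ ht)
      omega

private lemma set_sum_aux (l : List ℕ) (t : ℕ) (ht : t < l.length) (v : ℕ) :
    (l.set t v).sum + l.getD t 0 = l.sum + v := by
  induction l generalizing t with
  | nil => simp at ht
  | cons a l ih =>
    cases t with
    | zero => simp [List.set]; omega
    | succ t =>
      simp only [List.set, List.sum_cons, List.getD_cons_succ]
      have := ih t (by simpa using Nat.lt_of_succ_lt_succ ht)
      omega

def fRec (l : List ℕ) : ℕ :=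
  if hl : l.length ≤ 1 then l.sum
  else if hex : ∃ t, t < l.length ∧ |transParam l t| ≤ (l.getD t 0 : ℤ) then
    let t := Nat.find hex
    if hs0 : transParam l t = 0 then l.getD t 0 + fRec (l.eraseIdx t)
    else if heq : (l.getD t 0 : ℤ) = |transParam l t| then fRec (l.eraseIdx t)
    else fRec (l.set t (l.getD t 0 - (transParam l t).natAbs))
  else 0
termination_by l.sum + l.length
decreasing_by
  · have ht := (Nat.find_spec hex).1
    have h1 := eraseIdx_sum_aux l _ ht
    have h2 : (l.eraseIdx (Nat.find hex)).length + 1 = l.length :=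
      List.length_eraseIdx_add_one ht
    omega
  · have ht := (Nat.find_spec hex).1
    have h1 := eraseIdx_sum_aux l _ ht
    have h2 : (l.eraseIdx (Nat.find hex)).length + 1 = l.length :=
      List.length_eraseIdx_add_one ht
    omega
  · have ht := (Nat.find_spec hex).1
    have habs := (Nat.find_spec hex).2
    set t := Nat.find hex
    have hpos : 1 ≤ (transParam l t).natAbs := Int.natAbs_pos.mpr hs0
    have hle : (transParam l t).natAbs ≤ l.getD t 0 := by
      have h : ((transParam l t).natAbs : ℤ) ≤ (l.getD t 0 : ℤ) := by
        rw [← Int.abs_eq_natAbs]; exact habs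
      exact_mod_cast h
    have h1 := set_sum_aux l t ht (l.getD t 0 - (transParam l t).natAbs)
    have h2 : (l.set t (l.getD t 0 - (transParam l t).natAbs)).length = l.length :=
      List.length_set ..
    omega

/-!
The exchange of the reversed composition inverts `T_λ`. Hence the orbits of `T_λ` are cycles, and
`γ` is unchanged when `λ` is reversed.

Write `λ = p ++ m :: q` and let `s = ∑ q - ∑ p` be the translation parameter of the part `m`.
If `s = 0`, the block of `m` consists of `m` fixed points, and closing the gap left by removing them
conjugates the rest of `T_λ` to the exchange of `p ++ q`. If `0 < s ≤ m`, the `s` leftmost points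
`x` of the block are disjoint from their images `x + s`; the first-return map of `T_λ` to the
complement of these points becomes, once the gap is closed, the exchange of `p ++ (m - s) :: q`, and
has as many orbits as `T_λ`. The case `s < 0` follows by reversal. The recursion never gets stuck,
because the block containing the midpoint of `{1, …, n}` satisfies `|s| ≤ m`.
-/

open Function Set

section ForwardOrbits

variable {α β : Type*} {f : α → α} {g : β → β} {x y : α} {S : Set α} {S' : Set β}

/-- The forward orbit `{x, f x, f (f x), …}` of a point under a self-map, which for `f = T_λ` is
`orbit λ x`. -/
def forwardOrbit (f : α → α) (x : α) : Set α := range fun k : ℕ => f^[k] x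

lemma iterate_mem_forwardOrbit (f : α → α) (k : ℕ) (x : α) : f^[k] x ∈ forwardOrbit f x :=
  mem_range_self k

lemma self_mem_forwardOrbit (f : α → α) (x : α) : x ∈ forwardOrbit f x :=
  iterate_mem_forwardOrbit f 0 x

lemma apply_mem_forwardOrbit (f : α → α) (x : α) : f x ∈ forwardOrbit f x :=
  iterate_mem_forwardOrbit f 1 x

lemma forwardOrbit_eq_singleton (h : IsFixedPt f x) : forwardOrbit f x = {x} := by
  simp only [forwardOrbit, iterate_fixed h, range_const]

lemma mem_periodicPts_of_injOn (hS : S.Finite) (hf : MapsTo f S S) (hinj : InjOn f S)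
    (hx : x ∈ S) : x ∈ periodicPts f := by
  have := hS.to_subtype
  obtain ⟨n, hn, hper⟩ := (hf.restrict_inj.mpr hinj).mem_periodicPts ⟨x, hx⟩
  refine ⟨n, hn, ?_⟩
  rw [IsPeriodicPt, IsFixedPt, ← hf.coe_iterate_restrict ⟨x, hx⟩ n, hper.eq]

lemma setOf_mem_periodicOrbit (hx : x ∈ periodicPts f) :
    {y | y ∈ periodicOrbit f x} = forwardOrbit f x :=
  ext fun _ => mem_periodicOrbit_iff hx

lemma forwardOrbit_eq_of_mem (hx : x ∈ periodicPts f) (hy : y ∈ forwardOrbit f x) :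
    forwardOrbit f y = forwardOrbit f x := by
  obtain ⟨k, rfl⟩ := hy
  have hk : f^[k] x ∈ periodicPts f := by
    obtain ⟨n, hn, hper⟩ := hx
    exact ⟨n, hn, hper.apply_iterate k⟩
  rw [← setOf_mem_periodicOrbit hx, ← setOf_mem_periodicOrbit hk, periodicOrbit_apply_iterate_eq hx]

lemma apply_mem_forwardOrbit_of_leftInvOn {f' : α → α} (hf : MapsTo f S S)
    (hinv : LeftInvOn f' f S) (hx : x ∈ S) (hper : x ∈ periodicPts f) :
    f' x ∈ forwardOrbit f x := by
  obtain ⟨_ | n, hn, hper⟩ := hper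
  · exact absurd hn (lt_irrefl 0)
  · have hpred : f (f^[n] x) = x := by rw [← iterate_succ_apply' f, hper.eq]
    refine ⟨n, ?_⟩
    change f^[n] x = f' x
    rw [← hinv (hf.iterate n hx), hpred]

/-- Sending the `g`-orbit of `y` to the `f`-orbit of `ψ y` is well defined and onto. -/
lemma ncard_image_forwardOrbit_le {ψ : β → α} (hS' : S'.Finite) (hf : S ⊆ periodicPts f)
    (hg : MapsTo g S' S') (hψ : MapsTo ψ S' S)
    (hstep : ∀ y ∈ S', ψ (g y) ∈ forwardOrbit f (ψ y))
    (hsurj : ∀ x ∈ S, ∃ y ∈ S', ψ y ∈ forwardOrbit f x) :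
    (forwardOrbit f '' S).ncard ≤ (forwardOrbit g '' S').ncard := by
  let Ψ : Set β → Set α := fun O => ⋃ z ∈ O, forwardOrbit f (ψ z)
  have hΨ : ∀ y ∈ S', Ψ (forwardOrbit g y) = forwardOrbit f (ψ y) := by
    intro y hy
    have hconst (k : ℕ) : forwardOrbit f (ψ (g^[k] y)) = forwardOrbit f (ψ y) := by
      induction k with
      | zero => rfl
      | succ k ih =>
        have hk : g^[k] y ∈ S' := hg.iterate k hy
        rw [iterate_succ_apply', ← ih, forwardOrbit_eq_of_mem (hf (hψ hk)) (hstep _ hk)]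
    simp only [Ψ, forwardOrbit, biUnion_range]
    exact (iUnion_congr hconst).trans (iUnion_const _)
  have hsub : forwardOrbit f '' S ⊆ Ψ '' (forwardOrbit g '' S') := by
    rintro _ ⟨x, hx, rfl⟩
    obtain ⟨y, hy, hyx⟩ := hsurj x hx
    exact ⟨_, mem_image_of_mem _ hy, by rw [hΨ y hy, forwardOrbit_eq_of_mem (hf hx) hyx]⟩
  have hfin : (forwardOrbit g '' S').Finite := hS'.image _
  exact (ncard_le_ncard hsub (hfin.image Ψ)).trans (ncard_image_le hfin)

lemma ncard_image_forwardOrbit_eq {ψ : β → α} {π : α → β} (hS : S.Finite) (hS' : S'.Finite)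
    (hfper : S ⊆ periodicPts f) (hgper : S' ⊆ periodicPts g)
    (hf : MapsTo f S S) (hg : MapsTo g S' S') (hψ : MapsTo ψ S' S) (hπ : MapsTo π S S')
    (hψg : ∀ y ∈ S', ψ (g y) ∈ forwardOrbit f (ψ y))
    (hπf : ∀ x ∈ S, π (f x) ∈ forwardOrbit g (π x))
    (hψπ : ∀ x ∈ S, ψ (π x) ∈ forwardOrbit f x) (hπψ : ∀ y ∈ S', π (ψ y) ∈ forwardOrbit g y) :
    (forwardOrbit f '' S).ncard = (forwardOrbit g '' S').ncard :=
  le_antisymm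
    (ncard_image_forwardOrbit_le hS' hfper hg hψ hψg fun x hx => ⟨π x, hπ hx, hψπ x hx⟩)
    (ncard_image_forwardOrbit_le hS hgper hf hπ hπf fun y hy => ⟨ψ y, hψ hy, hπψ y hy⟩)

lemma ncard_image_forwardOrbit_image {ψ : β → α} (hψ : Injective ψ) (hg : MapsTo g S' S')
    (hconj : ∀ y ∈ S', f (ψ y) = ψ (g y)) :
    (forwardOrbit f '' (ψ '' S')).ncard = (forwardOrbit g '' S').ncard := by
  have horbit : ∀ y ∈ S', forwardOrbit f (ψ y) = ψ '' forwardOrbit g y := by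
    intro y hy
    have hiter (k : ℕ) : f^[k] (ψ y) = ψ (g^[k] y) := by
      induction k with
      | zero => rfl
      | succ k ih => rw [iterate_succ_apply', iterate_succ_apply', ih, hconj _ (hg.iterate k hy)]
    simp only [forwardOrbit, hiter, ← range_comp, comp_def]
  rw [image_image, image_congr horbit, ← image_image (ψ '' ·),
    ncard_image_of_injective _ hψ.image_injective]

lemma ncard_image_forwardOrbit_union_of_isFixedPt {F : Set α} (hF : F.Finite) (hS : S.Finite)
    (hdisj : Disjoint F S) (hfix : ∀ x ∈ F, IsFixedPt f x) :
    (forwardOrbit f '' (F ∪ S)).ncard = F.ncard + (forwardOrbit f '' S).ncard := by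
  have hsingleton : forwardOrbit f '' F = singleton '' F :=
    image_congr fun x hx => forwardOrbit_eq_singleton (hfix x hx)
  rw [image_union, hsingleton, ncard_union_eq _ (hF.image _) (hS.image _),
    ncard_image_of_injective _ singleton_injective]
  rw [Set.disjoint_left]
  rintro _ ⟨x, hx, rfl⟩ ⟨y, hy, hyx⟩
  have hy_eq : y = x := mem_singleton_iff.mp (hyx ▸ self_mem_forwardOrbit f y)
  exact Set.disjoint_left.mp hdisj hx (hy_eq ▸ hy)

end ForwardOrbits

section Exchange

variable {l p q : List ℕ} {m : ℕ} {x : ℤ}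

lemma transParam_append_cons (p q : List ℕ) (m : ℕ) :
    transParam (p ++ m :: q) p.length = (q.sum : ℤ) - p.sum := by
  simp [transParam]

lemma cast_sum_append_cons (p q : List ℕ) (m : ℕ) :
    ((p ++ m :: q).sum : ℤ) = p.sum + m + q.sum := by
  simp [add_assoc]

lemma Texch_append_cons (h : x ∈ Ioc (p.sum : ℤ) (p.sum + m)) :
    Texch (p ++ m :: q) x = x + (q.sum - p.sum) := by
  have htake : ((p ++ m :: q).take p.length).sum = p.sum := by simp
  have htake_succ : ((p ++ m :: q).take (p.length + 1)).sum = p.sum + m := by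
    simp [List.take_length_add_append]
  rw [Texch, Finset.sum_eq_single p.length, htake, htake_succ, transParam_append_cons,
    if_pos (by simpa using h)]
  · rintro i - hi
    refine if_neg ?_
    rintro ⟨hlt, hle⟩
    have hmono := List.monotone_sum_take (p ++ m :: q)
    obtain ⟨hpx, hxp⟩ := h
    rcases hi.lt_or_gt with hi | hi
    · have := hmono (Nat.succ_le_of_lt hi)
      simp only [Nat.succ_eq_add_one, htake] at this
      omega
    · have := hmono (Nat.succ_le_of_lt hi)
      simp only [Nat.succ_eq_add_one, htake_succ] at this
      omega
  · simp

lemma exists_mem_block (hx : x ∈ Icc 1 (l.sum : ℤ)) :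
    ∃ (p : List ℕ) (m : ℕ) (q : List ℕ),
      l = p ++ m :: q ∧ x ∈ Ioc (p.sum : ℤ) (p.sum + m) := by
  induction l generalizing x with
  | nil => simp at hx
  | cons a l ih =>
    obtain ⟨hx1, hxl⟩ := hx
    rw [List.sum_cons, Nat.cast_add] at hxl
    by_cases hxa : x ≤ a
    · exact ⟨[], a, l, rfl, by simp; omega⟩
    · obtain ⟨p, m, q, rfl, hp, hm⟩ := ih (x := x - a) ⟨by omega, by omega⟩
      exact ⟨a :: p, m, q, rfl, by simp only [List.sum_cons, Nat.cast_add, mem_Ioc]; omega⟩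

lemma mapsTo_Texch (l : List ℕ) : MapsTo (Texch l) (Icc 1 (l.sum : ℤ)) (Icc 1 (l.sum : ℤ)) := by
  intro x hx
  obtain ⟨p, m, q, rfl, hxm⟩ := exists_mem_block hx
  rw [Texch_append_cons hxm, cast_sum_append_cons]
  simp only [mem_Ioc, mem_Icc] at hxm ⊢
  omega

lemma leftInvOn_Texch_reverse (l : List ℕ) :
    LeftInvOn (Texch l.reverse) (Texch l) (Icc 1 (l.sum : ℤ)) := by
  intro x hx
  obtain ⟨p, m, q, rfl, hxm⟩ := exists_mem_block hx
  have hreverse : (p ++ m :: q).reverse = q.reverse ++ m :: p.reverse := by simp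
  rw [Texch_append_cons hxm, hreverse, Texch_append_cons] <;> simp only [List.sum_reverse]
  · ring
  · simp only [mem_Ioc] at hxm ⊢
    omega

lemma Icc_subset_periodicPts_Texch (l : List ℕ) : Icc 1 (l.sum : ℤ) ⊆ periodicPts (Texch l) :=
  fun _ => mem_periodicPts_of_injOn (finite_Icc _ _) (mapsTo_Texch l)
    (leftInvOn_Texch_reverse l).injOn

lemma numOrbits_eq_ncard_image (l : List ℕ) :
    numOrbits l = (forwardOrbit (Texch l) '' Icc 1 (l.sum : ℤ)).ncard := by
  refine congrArg ncard (ext fun O => ?_)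
  simp only [orbitsSet, mem_ofPred_eq, mem_image, mem_Icc, and_assoc, eq_comm (a := O)]
  rfl

lemma numOrbits_reverse_le (l : List ℕ) : numOrbits l.reverse ≤ numOrbits l := by
  have hinv := leftInvOn_Texch_reverse l.reverse
  have hper := Icc_subset_periodicPts_Texch l.reverse
  have hmaps := mapsTo_Texch l.reverse
  rw [numOrbits_eq_ncard_image, numOrbits_eq_ncard_image]
  rw [List.sum_reverse] at *
  rw [List.reverse_reverse] at hinv
  exact ncard_image_forwardOrbit_le (ψ := id) (finite_Icc _ _) hper (mapsTo_Texch l) (mapsTo_id _)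
    (fun y hy => apply_mem_forwardOrbit_of_leftInvOn hmaps hinv hy (hper hy))
    (fun x hx => ⟨x, hx, self_mem_forwardOrbit _ x⟩)

lemma numOrbits_reverse (l : List ℕ) : numOrbits l.reverse = numOrbits l :=
  le_antisymm (numOrbits_reverse_le l) (by simpa using numOrbits_reverse_le l.reverse)

end Exchange

section ChangingAPart

variable {p q : List ℕ} {m s : ℕ} {x : ℤ}

lemma Texch_append_cons_left (hx : x ∈ Icc 1 (p.sum : ℤ)) :
    Texch (p ++ m :: q) x = Texch (p ++ q) x + m ∧ (q.sum : ℤ) < Texch (p ++ q) x := by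
  obtain ⟨u, c, v, rfl, hxu⟩ := exists_mem_block hx
  simp only [List.append_assoc, List.cons_append, Texch_append_cons hxu, List.sum_append,
    List.sum_cons, Nat.cast_add]
  rw [mem_Ioc] at hxu
  omega

lemma Texch_append_cons_right (hx : x ∈ Ioc (p.sum + m : ℤ) (p.sum + m + q.sum)) :
    Texch (p ++ m :: q) x = Texch (p ++ q) (x - m) ∧ Texch (p ++ q) (x - m) ≤ q.sum := by
  rw [mem_Ioc] at hx
  obtain ⟨u, c, v, rfl, hxu⟩ := exists_mem_block (l := q) (x := x - p.sum - m) ⟨by omega, by omega⟩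
  rw [mem_Ioc] at hxu
  have hlong : Texch ((p ++ m :: u) ++ c :: v) x = x + (v.sum - (p ++ m :: u).sum) :=
    Texch_append_cons (by rw [cast_sum_append_cons, mem_Ioc]; omega)
  have hshort : Texch ((p ++ u) ++ c :: v) (x - m) = x - m + (v.sum - (p ++ u).sum) :=
    Texch_append_cons (by rw [List.sum_append, Nat.cast_add, mem_Ioc]; omega)
  rw [cast_sum_append_cons] at hlong
  simp only [List.append_assoc, List.cons_append, List.sum_append, List.sum_cons,
    Nat.cast_add] at *
  omega

lemma numOrbits_append_zero_cons (p q : List ℕ) :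
    numOrbits (p ++ 0 :: q) = numOrbits (p ++ q) := by
  have hsum : (p ++ 0 :: q).sum = (p ++ q).sum := by simp
  have hcongr : ∀ x ∈ Icc 1 ((p ++ q).sum : ℤ), Texch (p ++ 0 :: q) x = Texch (p ++ q) x := by
    rintro x ⟨hx1, hxn⟩
    rw [List.sum_append, Nat.cast_add] at hxn
    rcases le_or_gt x p.sum with hxp | hpx
    · simpa using (Texch_append_cons_left (m := 0) ⟨hx1, hxp⟩).1
    · simpa using (Texch_append_cons_right (m := 0) ⟨by simpa using hpx, by simpa using hxn⟩).1
  have himage := ncard_image_forwardOrbit_image injective_id (mapsTo_Texch (p ++ q)) hcongr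
  rwa [image_id, ← hsum, ← numOrbits_eq_ncard_image, hsum, ← numOrbits_eq_ncard_image] at himage

/-- The map moving every point above `a` by `s`. For `s ≥ 0` it opens the gap `(a, a + s]`, which
its left inverse `shiftAbove (a + s) (-s)` closes again. -/
def shiftAbove (a s x : ℤ) : ℤ := if x ≤ a then x else x + s

lemma injective_shiftAbove (a : ℤ) (s : ℕ) : Injective (shiftAbove a s) := by
  intro x y hxy
  grind [shiftAbove]

lemma Icc_eq_Ioc_union_image_shiftAbove {a n : ℤ} (s : ℕ) (ha : 0 ≤ a) (han : a ≤ n) :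
    Icc 1 (n + s) = Ioc a (a + s) ∪ shiftAbove a s '' Icc 1 n := by
  ext x
  simp only [mem_union, mem_Icc, mem_Ioc, mem_image, shiftAbove]
  constructor
  · rintro ⟨hx1, hxn⟩
    by_cases hxa : x ≤ a
    · exact Or.inr ⟨x, by omega, if_pos hxa⟩
    by_cases hxs : x ≤ a + s
    · exact Or.inl (by omega)
    · exact Or.inr ⟨x - s, by omega, by rw [if_neg (by omega)]; ring⟩
  · grind

lemma disjoint_Ioc_image_shiftAbove (a : ℤ) (s : ℕ) (S : Set ℤ) :
    Disjoint (Ioc a (a + s)) (shiftAbove a s '' S) := by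
  rw [Set.disjoint_left]
  rintro _ ⟨hlt, hle⟩ ⟨y, -, rfl⟩
  grind [shiftAbove]

lemma numOrbits_append_cons_of_sum_eq (m : ℕ) (h : q.sum = p.sum) :
    numOrbits (p ++ m :: q) = m + numOrbits (p ++ q) := by
  have hsum : ((p ++ q).sum : ℤ) = p.sum + q.sum := by simp
  have hfix : ∀ x ∈ Ioc (p.sum : ℤ) (p.sum + m), IsFixedPt (Texch (p ++ m :: q)) x := by
    intro x hx
    rw [IsFixedPt, Texch_append_cons hx, h, sub_self, add_zero]
  have hconj : ∀ y ∈ Icc 1 ((p ++ q).sum : ℤ),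
      Texch (p ++ m :: q) (shiftAbove p.sum m y) = shiftAbove p.sum m (Texch (p ++ q) y) := by
    rintro y ⟨hy1, hyn⟩
    rw [hsum] at hyn
    rcases le_or_gt y p.sum with hyp | hpy
    · obtain ⟨heq, hlt⟩ := Texch_append_cons_left (m := m) (q := q) ⟨hy1, hyp⟩
      rw [shiftAbove, if_pos hyp, heq, shiftAbove, if_neg (by omega)]
    · obtain ⟨heq, hle⟩ := Texch_append_cons_right (p := p) (m := m) (q := q) (x := y + m)
        ⟨by omega, by omega⟩
      rw [add_sub_cancel_right] at heq hle
      rw [shiftAbove, if_neg (by omega), heq, shiftAbove, if_pos (by omega)]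
  have hIcc : Icc 1 ((p ++ m :: q).sum : ℤ) =
      Ioc (p.sum : ℤ) (p.sum + m) ∪ shiftAbove p.sum m '' Icc 1 ((p ++ q).sum : ℤ) := by
    rw [← Icc_eq_Ioc_union_image_shiftAbove m (by omega) (by omega), cast_sum_append_cons, hsum,
      add_right_comm]
  rw [numOrbits_eq_ncard_image, numOrbits_eq_ncard_image, hIcc,
    ncard_image_forwardOrbit_union_of_isFixedPt (finite_Ioc _ _) ((finite_Icc _ _).image _)
      (disjoint_Ioc_image_shiftAbove _ _ _) hfix,
    ncard_image_forwardOrbit_image (injective_shiftAbove _ _) (mapsTo_Texch _) hconj,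
    ← Finset.coe_Ioc, ncard_coe_finset, Int.card_Ioc, add_sub_cancel_left, Int.toNat_natCast]

lemma shiftAbove_Texch_mem_forwardOrbit {y : ℤ} (h : q.sum = p.sum + s)
    (hy : y ∈ Icc 1 ((p ++ m :: q).sum : ℤ)) :
    shiftAbove p.sum s (Texch (p ++ m :: q) y) ∈
      forwardOrbit (Texch (p ++ (m + s) :: q)) (shiftAbove p.sum s y) := by
  rw [cast_sum_append_cons, mem_Icc] at hy
  have hblock {z : ℤ} (hz : z ∈ Ioc (p.sum : ℤ) (p.sum + (m + s : ℕ))) :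
      Texch (p ++ (m + s) :: q) z = z + s := by
    rw [Texch_append_cons hz, h]; push_cast; ring
  suffices shiftAbove p.sum s (Texch (p ++ m :: q) y) =
        Texch (p ++ (m + s) :: q) (shiftAbove p.sum s y) ∨
      shiftAbove p.sum s (Texch (p ++ m :: q) y) =
        Texch (p ++ (m + s) :: q) (Texch (p ++ (m + s) :: q) (shiftAbove p.sum s y)) by
    rcases this with h1 | h2
    · rw [h1]; exact iterate_mem_forwardOrbit _ 1 _
    · rw [h2]; exact iterate_mem_forwardOrbit _ 2 _
  rcases le_or_gt y p.sum with hyp | hpy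
  · have hsmall := Texch_append_cons_left (m := m) (q := q) ⟨hy.1, hyp⟩
    have hlarge := Texch_append_cons_left (m := m + s) (q := q) ⟨hy.1, hyp⟩
    grind [shiftAbove]
  rcases le_or_gt y (p.sum + m) with hym | hmy
  · have hsmall := Texch_append_cons (q := q) ⟨hpy, hym⟩
    have hlarge := hblock (z := y + s) ⟨by omega, by omega⟩
    grind [shiftAbove]
  · have hsmall := Texch_append_cons_right (p := p) (m := m) (q := q) (x := y)
      ⟨by omega, by omega⟩
    have hlarge := Texch_append_cons_right (p := p) (m := m + s) (q := q) (x := y + s)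
      ⟨by omega, by omega⟩
    have hremoved := @hblock (Texch (p ++ m :: q) y)
    simp only [mem_Ioc] at hremoved
    grind [shiftAbove]

lemma shiftAbove_neg_Texch_mem_forwardOrbit (h : q.sum = p.sum + s)
    (hx : x ∈ Icc 1 ((p ++ (m + s) :: q).sum : ℤ)) :
    shiftAbove (p.sum + s) (-s) (Texch (p ++ (m + s) :: q) x) ∈
      forwardOrbit (Texch (p ++ m :: q)) (shiftAbove (p.sum + s) (-s) x) := by
  rw [cast_sum_append_cons, mem_Icc] at hx
  suffices shiftAbove (p.sum + s) (-s) (Texch (p ++ (m + s) :: q) x) =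
        shiftAbove (p.sum + s) (-s) x ∨
      shiftAbove (p.sum + s) (-s) (Texch (p ++ (m + s) :: q) x) =
        Texch (p ++ m :: q) (shiftAbove (p.sum + s) (-s) x) by
    rcases this with h0 | h1
    · rw [h0]; exact self_mem_forwardOrbit _ _
    · rw [h1]; exact apply_mem_forwardOrbit _ _
  rcases le_or_gt x p.sum with hxp | hpx
  · have hsmall := Texch_append_cons_left (m := m) (q := q) ⟨hx.1, hxp⟩
    have hlarge := Texch_append_cons_left (m := m + s) (q := q) ⟨hx.1, hxp⟩
    grind [shiftAbove]
  rcases le_or_gt x (p.sum + (m + s : ℕ)) with hxm | hmx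
  · have hlarge := Texch_append_cons (q := q) ⟨hpx, hxm⟩
    have hsmall := Texch_append_cons (p := p) (m := m) (q := q) (x := x - s)
    simp only [mem_Ioc] at hsmall
    grind [shiftAbove]
  · have hsmall := Texch_append_cons_right (p := p) (m := m) (q := q) (x := x - s)
      ⟨by omega, by omega⟩
    have hlarge := Texch_append_cons_right (p := p) (m := m + s) (q := q) ⟨hmx, hx.2⟩
    grind [shiftAbove]

lemma numOrbits_append_add_cons (m : ℕ) (h : q.sum = p.sum + s) :
    numOrbits (p ++ (m + s) :: q) = numOrbits (p ++ m :: q) := by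
  have hlarge := cast_sum_append_cons p q (m + s)
  have hsmall := cast_sum_append_cons p q m
  rw [numOrbits_eq_ncard_image, numOrbits_eq_ncard_image]
  refine ncard_image_forwardOrbit_eq (ψ := shiftAbove p.sum s)
    (π := shiftAbove (p.sum + s) (-s)) (finite_Icc _ _) (finite_Icc _ _)
    (Icc_subset_periodicPts_Texch _) (Icc_subset_periodicPts_Texch _)
    (mapsTo_Texch _) (mapsTo_Texch _) ?_ ?_
    (fun _ => shiftAbove_Texch_mem_forwardOrbit h)
    (fun _ => shiftAbove_neg_Texch_mem_forwardOrbit h) ?_ ?_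
  · rintro y ⟨hy1, hyn⟩
    grind [shiftAbove]
  · rintro x ⟨hx1, hxn⟩
    grind [shiftAbove]
  · rintro x -
    -- On the removed points `T x = x + s`, so the composite is `T` there and `id` elsewhere.
    by_cases hx : x ∈ Ioc (p.sum : ℤ) (p.sum + s)
    · have hTx := Texch_append_cons (q := q) (m := m + s) (x := x) ⟨hx.1, by have := hx.2; omega⟩
      have heq : shiftAbove p.sum s (shiftAbove (p.sum + s) (-s) x) =
          Texch (p ++ (m + s) :: q) x := by
        grind [shiftAbove]
      rw [heq]
      exact apply_mem_forwardOrbit _ _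
    · have heq : shiftAbove p.sum s (shiftAbove (p.sum + s) (-s) x) = x := by
        grind [shiftAbove]
      rw [heq]
      exact self_mem_forwardOrbit _ _
  · rintro y -
    have heq : shiftAbove (p.sum + s) (-s) (shiftAbove p.sum s y) = y := by grind [shiftAbove]
    rw [heq]
    exact self_mem_forwardOrbit _ _

lemma numOrbits_append_sub_natAbs_cons (hle : |(q.sum : ℤ) - p.sum| ≤ m) :
    numOrbits (p ++ (m - ((q.sum : ℤ) - p.sum).natAbs) :: q) = numOrbits (p ++ m :: q) := by
  rw [Int.abs_eq_natAbs] at hle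
  obtain ⟨k, rfl⟩ : ∃ k, m = k + ((q.sum : ℤ) - p.sum).natAbs :=
    ⟨m - ((q.sum : ℤ) - p.sum).natAbs, by omega⟩
  rw [Nat.add_sub_cancel]
  rcases le_total p.sum q.sum with hpq | hqp
  · exact (numOrbits_append_add_cons k (by omega)).symm
  · have hreverse (c : ℕ) : numOrbits (p ++ c :: q) = numOrbits (q.reverse ++ c :: p.reverse) := by
      rw [← numOrbits_reverse]
      simp
    rw [hreverse, hreverse]
    refine (numOrbits_append_add_cons k ?_).symm
    rw [List.sum_reverse, List.sum_reverse]
    omega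

end ChangingAPart

section Recursion

variable {l : List ℕ} {t : ℕ}

lemma eq_take_append_getD_cons_drop (ht : t < l.length) :
    l = l.take t ++ l.getD t 0 :: l.drop (t + 1) := by
  rw [List.getD_eq_getElem _ _ ht, List.getElem_cons_drop, List.take_append_drop]

lemma numOrbits_eq_add_eraseIdx (ht : t < l.length) (hs : transParam l t = 0) :
    numOrbits l = l.getD t 0 + numOrbits (l.eraseIdx t) := by
  conv_lhs => rw [eq_take_append_getD_cons_drop ht]
  rw [List.eraseIdx_eq_take_drop_succ]
  refine numOrbits_append_cons_of_sum_eq _ ?_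
  rw [transParam] at hs
  omega

lemma numOrbits_set_sub_natAbs (ht : t < l.length) (hle : |transParam l t| ≤ l.getD t 0) :
    numOrbits (l.set t (l.getD t 0 - (transParam l t).natAbs)) = numOrbits l := by
  conv_rhs => rw [eq_take_append_getD_cons_drop ht]
  rw [List.set_eq_take_append_cons_drop, if_pos ht]
  exact numOrbits_append_sub_natAbs_cons hle

lemma numOrbits_eraseIdx_of_eq_abs (ht : t < l.length) (heq : (l.getD t 0 : ℤ) = |transParam l t|) :
    numOrbits (l.eraseIdx t) = numOrbits l := by
  have hzero : l.getD t 0 - (transParam l t).natAbs = 0 := by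
    rw [Int.abs_eq_natAbs] at heq
    omega
  rw [← numOrbits_set_sub_natAbs ht heq.ge, hzero,
    List.set_eq_take_append_cons_drop, if_pos ht, numOrbits_append_zero_cons,
    List.eraseIdx_eq_take_drop_succ]

lemma numOrbits_nil : numOrbits [] = 0 := by
  simp [numOrbits_eq_ncard_image]

lemma numOrbits_eq_sum_of_length_le_one (hl : l.length ≤ 1) : numOrbits l = l.sum := by
  match l, hl with
  | [], _ => exact numOrbits_nil
  | [m], _ => simpa [numOrbits_nil] using numOrbits_append_cons_of_sum_eq (p := []) (q := []) m rfl

/-- If `n > 0`, the block containing the midpoint of `{1, …, n}` qualifies. -/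
lemma exists_abs_transParam_le (hl : l ≠ []) :
    ∃ t, t < l.length ∧ |transParam l t| ≤ (l.getD t 0 : ℤ) := by
  rcases Nat.eq_zero_or_pos l.sum with hzero | hpos
  · obtain ⟨a, l, rfl⟩ := List.exists_cons_of_ne_nil hl
    have hsum : l.sum = 0 := by rw [List.sum_cons] at hzero; omega
    exact ⟨0, by simp, by simp [transParam, hsum]⟩
  · obtain ⟨p, m, q, rfl, hmid⟩ := exists_mem_block (l := l) (x := (l.sum + 1) / 2)
      ⟨by omega, by omega⟩
    rw [cast_sum_append_cons, mem_Ioc] at hmid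
    refine ⟨p.length, by simp, ?_⟩
    rw [transParam_append_cons, show (p ++ m :: q).getD p.length 0 = m by simp, abs_le]
    omega

theorem fRec_eq_numOrbits_general (l : List ℕ) : fRec l = numOrbits l := by
  induction l using fRec.induct with
  | case1 l hl => rw [fRec, dif_pos hl, numOrbits_eq_sum_of_length_le_one hl]
  | case2 l hl hex t hs ih =>
    rw [fRec, dif_neg hl, dif_pos hex, dif_pos hs, ih,
      numOrbits_eq_add_eraseIdx (Nat.find_spec hex).1 hs]
  | case3 l hl hex t hs heq ih =>
    rw [fRec, dif_neg hl, dif_pos hex, dif_neg hs, dif_pos heq, ih,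
      numOrbits_eraseIdx_of_eq_abs (Nat.find_spec hex).1 heq]
  | case4 l hl hex t hs heq ih =>
    rw [fRec, dif_neg hl, dif_pos hex, dif_neg hs, dif_neg heq, ih,
      numOrbits_set_sub_natAbs (Nat.find_spec hex).1 (Nat.find_spec hex).2]
  | case5 l hl hex => exact absurd (exists_abs_transParam_le (by rintro rfl; simp at hl)) hex

end Recursion

/-- Theorem 3.5: the recursive function `f` counts the orbits of `T_λ`. -/
theorem fRec_eq_numOrbits (l : List ℕ) (hl : IsComposition l) :
    fRec l = numOrbits l :=
  fRec_eq_numOrbits_general l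
end

section
/- Let (λ_1, λ_2, λ_3) be a composition of n = λ_1 + λ_2 + λ_3, set d = gcd(λ_1 + λ_2, λ_2 + λ_3), and write n = qd + r with 0 ≤ r < d. Then T_{(λ_1,λ_2,λ_3)} has exactly d orbits; moreover, exactly r of the orbits have cardinality q + 1 and the remaining d − r orbits have cardinality q. In particular, T_{(λ_1,λ_2,λ_3)} is minimal if and only if gcd(λ_1 + λ_2, λ_2 + λ_3) = 1. -/
/-!
Put `p = a + b`, `m = b + c` and `n = a + b + c`. The exchange `T` of the blocks `(a, b, c)` is the
first-return map to `{1, …, n}` of the exchange of the two blocks `(p, m)`, which is the rotation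
`x ↦ x + m` modulo `p + m`: the outer blocks return after one step, and the middle block after two,
the intermediate point lying in `(n, p + m]`. The orbits of the rotation are the residue classes
modulo `gcd (m, p + m) = gcd (p, m) = d`, so the orbits of `T` are the residue classes modulo `d`
cut down to `{1, …, n}`. The class of `i + 1`, for `0 ≤ i < d`, has `q + 1` elements if `i < r`
and `q` otherwise.
-/

section FirstReturn

variable {α : Type*} {R T : α → α} {s : Set α}

/-- `T` is the first-return map of `R` to `s`: from each point of `s`, the map `R` comes back to
`s`, and `T` is the first point of `s` it meets. The values of `T` outside `s` are unconstrained. -/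
def IsFirstReturnMap (R T : α → α) (s : Set α) : Prop :=
  ∀ x ∈ s, T x ∈ s ∧ ∃ j, 0 < j ∧ R^[j] x = T x ∧ ∀ i, 0 < i → i < j → R^[i] x ∉ s

namespace IsFirstReturnMap

lemma mapsTo (h : IsFirstReturnMap R T s) : Set.MapsTo T s s := fun x hx => (h x hx).1

lemma exists_iterate_eq_iterate (h : IsFirstReturnMap R T s) (k : ℕ) {x : α} (hx : x ∈ s) :
    ∃ l, R^[l] x = T^[k] x := by
  induction k with
  | zero => exact ⟨0, rfl⟩
  | succ k ih =>
    obtain ⟨l, hl⟩ := ih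
    obtain ⟨-, j, -, hj, -⟩ := h _ (h.mapsTo.iterate k hx)
    exact ⟨j + l, by rw [Function.iterate_add_apply, hl, hj, Function.iterate_succ_apply']⟩

lemma exists_iterate_eq_of_iterate_mem (h : IsFirstReturnMap R T s) {k : ℕ} {x : α} (hx : x ∈ s)
    (hk : R^[k] x ∈ s) : ∃ l, T^[l] x = R^[k] x := by
  induction k using Nat.strong_induction_on generalizing x with
  | _ k ih =>
    obtain rfl | hk_pos := k.eq_zero_or_pos
    · exact ⟨0, rfl⟩
    obtain ⟨hTx, j, hj_pos, hj, hfirst⟩ := h x hx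
    have hjk : j ≤ k := not_lt.mp fun hkj => hfirst k hk_pos hkj hk
    have hsplit : R^[k] x = R^[k - j] (T x) := by
      rw [← hj, ← Function.iterate_add_apply, Nat.sub_add_cancel hjk]
    rw [hsplit] at hk ⊢
    obtain ⟨l, hl⟩ := ih (k - j) (by omega) hTx hk
    exact ⟨l + 1, hl⟩

lemma range_iterate_eq (h : IsFirstReturnMap R T s) {x : α} (hx : x ∈ s) :
    Set.range (fun k => T^[k] x) = Set.range (fun k => R^[k] x) ∩ s := by
  ext y
  constructor
  · rintro ⟨k, rfl⟩
    exact ⟨h.exists_iterate_eq_iterate k hx, h.mapsTo.iterate k hx⟩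
  · rintro ⟨⟨k, rfl⟩, hk⟩
    exact h.exists_iterate_eq_of_iterate_mem hx hk

end IsFirstReturnMap

end FirstReturn

section Translation

lemma Texch_eq_add_transParam {l : List ℕ} {i : ℕ} (hi : i < l.length) {x : ℤ}
    (hx : x ∈ Set.Ioc ((l.take i).sum : ℤ) (l.take (i + 1)).sum) :
    Texch l x = x + transParam l i := by
  obtain ⟨hx_lt, hx_le⟩ := hx
  rw [Texch, Finset.sum_eq_single_of_mem i (Finset.mem_range.mpr hi), if_pos ⟨hx_lt, hx_le⟩]
  rintro j - hji
  refine if_neg fun ⟨_, _⟩ => ?_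
  obtain hlt | hlt := hji.lt_or_gt
  · have hsum : (l.take (j + 1)).sum ≤ (l.take i).sum := l.monotone_sum_take hlt
    omega
  · have hsum : (l.take (i + 1)).sum ≤ (l.take j).sum := l.monotone_sum_take hlt
    omega

variable {p m a b c : ℕ} {x : ℤ}

lemma Texch_pair_left (hx : x ∈ Set.Ioc 0 (p : ℤ)) : Texch [p, m] x = x + m := by
  rw [Texch_eq_add_transParam (i := 0) (by simp) (by simpa using hx)]
  simp [transParam]

lemma Texch_pair_right (hx : x ∈ Set.Ioc (p : ℤ) (p + m)) : Texch [p, m] x = x - p := by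
  rw [Texch_eq_add_transParam (i := 1) (by simp) (by simpa using hx)]
  simp [transParam, sub_eq_add_neg]

lemma Texch_triple_left (hx : x ∈ Set.Ioc 0 (a : ℤ)) : Texch [a, b, c] x = x + (b + c) := by
  rw [Texch_eq_add_transParam (i := 0) (by simp) (by simpa using hx)]
  simp [transParam]

lemma Texch_triple_middle (hx : x ∈ Set.Ioc (a : ℤ) (a + b)) :
    Texch [a, b, c] x = x + (c - a) := by
  rw [Texch_eq_add_transParam (i := 1) (by simp) (by simpa using hx)]
  simp [transParam]

lemma Texch_triple_right (hx : x ∈ Set.Ioc (a + b : ℤ) (a + b + c)) :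
    Texch [a, b, c] x = x - (a + b) := by
  rw [Texch_eq_add_transParam (i := 2) (by simp) (by simpa [add_assoc] using hx)]
  simp [transParam, sub_eq_add_neg]

end Translation

section ResidueClass

/-- The residue class of `x` modulo `d`, cut down to `{1, …, n}`. -/
def residueClass (n d : ℕ) (x : ℤ) : Set ℤ := {y ∈ Set.Icc 1 (n : ℤ) | y ≡ x [ZMOD d]}

/-- The traces on `{1, …, n}` of the residue classes modulo `d`, leaving out the empty ones. -/
def residueClasses (n d : ℕ) : Set (Set ℤ) := residueClass n d '' Set.Icc 1 (n : ℤ)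

variable {n d : ℕ}

lemma residueClass_congr {x y : ℤ} (h : x ≡ y [ZMOD d]) :
    residueClass n d x = residueClass n d y := by
  ext z
  exact and_congr_right fun _ => ⟨fun hz => hz.trans h, fun hz => hz.trans h.symm⟩

lemma residueClass_natCast_add_one (n d i : ℕ) :
    residueClass n d (i + 1) =
      (fun t : ℕ => (t + 1 : ℤ)) '' ↑{t ∈ Finset.range n | t ≡ i [MOD d]} := by
  ext y
  simp only [residueClass, Set.mem_image, Finset.coe_filter, Finset.mem_range, Set.mem_ofPred_eq,
    Set.mem_Icc]
  constructor
  · rintro ⟨⟨hy_pos, hy_le⟩, hy⟩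
    obtain ⟨t, rfl⟩ : ∃ t : ℕ, y = t + 1 := ⟨(y - 1).toNat, by omega⟩
    exact ⟨t, ⟨by omega, Int.natCast_modEq_iff.mp (Int.ModEq.add_right_cancel' 1 hy)⟩, rfl⟩
  · rintro ⟨t, ⟨ht_lt, ht⟩, rfl⟩
    exact ⟨⟨by omega, by omega⟩, (Int.natCast_modEq_iff.mpr ht).add_right 1⟩

lemma ncard_residueClass {i : ℕ} (hi : i < d) :
    (residueClass n d (i + 1)).ncard = n / d + if i < n % d then 1 else 0 := by
  have hinj : Function.Injective fun t : ℕ => (t + 1 : ℤ) := fun s t hst => by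
    simpa using hst
  rw [residueClass_natCast_add_one, Set.ncard_image_of_injective _ hinj, Set.ncard_coe_finset,
    ← Nat.count_eq_card_filter_range, Nat.count_modEq_card _ (by omega), Nat.mod_eq_of_lt hi]

lemma residueClass_injOn (hdn : d ≤ n) :
    Set.InjOn (fun i : ℕ => residueClass n d (i + 1)) (Set.Iio d) := by
  intro i hi j hj hij
  rw [Set.mem_Iio] at hi hj
  have hmem : (i + 1 : ℤ) ∈ residueClass n d (j + 1) :=
    hij.subset ⟨⟨by omega, by omega⟩, Int.ModEq.rfl⟩
  have hmod : i ≡ j [MOD d] := Int.natCast_modEq_iff.mp (Int.ModEq.add_right_cancel' 1 hmem.2)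
  exact hmod.eq_of_lt_of_lt hi hj

lemma residueClasses_eq_image_Iio (hd : 0 < d) (hdn : d ≤ n) :
    residueClasses n d = (fun i : ℕ => residueClass n d (i + 1)) '' Set.Iio d := by
  apply Set.Subset.antisymm
  · rintro _ ⟨x, -, rfl⟩
    have hd' : (0 : ℤ) < d := by exact_mod_cast hd
    obtain ⟨i, hi⟩ := Int.eq_ofNat_of_zero_le (Int.emod_nonneg (x - 1) hd'.ne')
    refine ⟨i, ?_, residueClass_congr ?_⟩
    · have := Int.emod_lt_of_pos (x - 1) hd'
      rw [Set.mem_Iio]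
      omega
    · simpa [← hi] using (Int.mod_modEq (x - 1) d).add_right 1
  · rintro _ ⟨i, hi, rfl⟩
    rw [Set.mem_Iio] at hi
    exact ⟨i + 1, ⟨by omega, by omega⟩, rfl⟩

lemma ncard_residueClasses (hd : 0 < d) (hdn : d ≤ n) : (residueClasses n d).ncard = d := by
  rw [residueClasses_eq_image_Iio hd hdn, (residueClass_injOn hdn).ncard_image,
    ← Finset.coe_Iio, Set.ncard_coe_finset, Nat.card_Iio]

lemma ncard_residueClasses_ncard_eq (hd : 0 < d) (hdn : d ≤ n) (k : ℕ) :
    {S ∈ residueClasses n d | S.ncard = k}.ncard =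
      {i ∈ Finset.range d | (n / d + if i < n % d then 1 else 0) = k}.card := by
  have himage : {S ∈ residueClasses n d | S.ncard = k} =
      (fun i : ℕ => residueClass n d (i + 1)) ''
        ↑{i ∈ Finset.range d | (n / d + if i < n % d then 1 else 0) = k} := by
    rw [residueClasses_eq_image_Iio hd hdn]
    ext S
    constructor
    · rintro ⟨⟨i, hi, rfl⟩, hk⟩
      exact ⟨i, by simpa [← ncard_residueClass hi] using ⟨hi, hk⟩, rfl⟩
    · rintro ⟨i, hi, rfl⟩
      obtain ⟨hi, hk⟩ := Finset.mem_filter.mp hi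
      rw [Finset.mem_range] at hi
      exact ⟨⟨i, hi, rfl⟩, (ncard_residueClass hi).trans hk⟩
  rw [himage, ((residueClass_injOn hdn).mono _).ncard_image, Set.ncard_coe_finset]
  intro i hi
  simpa using (Finset.mem_filter.mp hi).1

lemma ncard_residueClasses_succ_div (hd : 0 < d) (hdn : d ≤ n) :
    {S ∈ residueClasses n d | S.ncard = n / d + 1}.ncard = n % d := by
  have hr : n % d < d := Nat.mod_lt n hd
  have hfilter : {i ∈ Finset.range d | (n / d + if i < n % d then 1 else 0) = n / d + 1} =
      Finset.range (n % d) := by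
    grind
  rw [ncard_residueClasses_ncard_eq hd hdn, hfilter, Finset.card_range]

lemma ncard_residueClasses_div (hd : 0 < d) (hdn : d ≤ n) :
    {S ∈ residueClasses n d | S.ncard = n / d}.ncard = d - n % d := by
  have hfilter : {i ∈ Finset.range d | (n / d + if i < n % d then 1 else 0) = n / d} =
      Finset.Ico (n % d) d := by
    grind
  rw [ncard_residueClasses_ncard_eq hd hdn, hfilter, Nat.card_Ico]

end ResidueClass

section Rotation

variable {p m : ℕ} {x : ℤ}

lemma mapsTo_Texch_pair (p m : ℕ) :
    Set.MapsTo (Texch [p, m]) (Set.Icc 1 (p + m)) (Set.Icc 1 (p + m)) := by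
  rintro x ⟨hx_pos, hx_le⟩
  obtain hxp | hpx := le_or_gt x p
  · rw [Texch_pair_left ⟨by omega, hxp⟩]
    exact ⟨by omega, by omega⟩
  · rw [Texch_pair_right ⟨hpx, hx_le⟩]
    exact ⟨by omega, by omega⟩

lemma Texch_pair_modEq (hx : x ∈ Set.Icc 1 (p + m : ℤ)) :
    Texch [p, m] x ≡ x + m [ZMOD p + m] := by
  obtain hxp | hpx := le_or_gt x p
  · rw [Texch_pair_left ⟨by linarith [hx.1], hxp⟩]
  · rw [Texch_pair_right ⟨hpx, hx.2⟩]
    exact Int.modEq_iff_dvd.mpr ⟨1, by ring⟩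

lemma iterate_Texch_pair_modEq (hx : x ∈ Set.Icc 1 (p + m : ℤ)) (k : ℕ) :
    (Texch [p, m])^[k] x ≡ x + k * m [ZMOD p + m] := by
  induction k with
  | zero => simp
  | succ k ih =>
    rw [Function.iterate_succ_apply']
    calc Texch [p, m] ((Texch [p, m])^[k] x)
        ≡ (Texch [p, m])^[k] x + m [ZMOD p + m] :=
          Texch_pair_modEq ((mapsTo_Texch_pair p m).iterate k hx)
      _ ≡ x + k * m + m [ZMOD p + m] := ih.add_right _
      _ = x + (k + 1 : ℕ) * m := by push_cast; ring

lemma exists_modEq_add_natCast_mul_iff {N : ℤ} (hN : N ≠ 0) (m x y : ℤ) :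
    (∃ k : ℕ, y ≡ x + k * m [ZMOD N]) ↔ y ≡ x [ZMOD Int.gcd m N] := by
  constructor
  · rintro ⟨k, hk⟩
    have hm : x + k * m ≡ x [ZMOD Int.gcd m N] :=
      Int.modEq_iff_dvd.mpr (by simpa using (Int.gcd_dvd_left m N).mul_left k)
    exact (hk.of_dvd (Int.gcd_dvd_right m N)).trans hm
  · intro h
    obtain ⟨u, v, huv⟩ : ∃ u v, y - x = m * u + N * v := by
      obtain ⟨t, ht⟩ := h.symm.dvd
      exact ⟨m.gcdA N * t, m.gcdB N * t, by rw [ht, Int.gcd_eq_gcd_ab]; ring⟩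
    obtain ⟨k, hk⟩ := Int.eq_ofNat_of_zero_le (Int.emod_nonneg u hN)
    refine ⟨k, ?_⟩
    calc y = x + u * m + N * v := by linarith
      _ ≡ x + u * m [ZMOD N] := by simp [Int.ModEq]
      _ ≡ x + k * m [ZMOD N] := ((hk ▸ Int.mod_modEq u N).symm.mul_right m).add_left x

lemma eq_of_modEq_of_mem_Icc {N x y : ℤ} (h : x ≡ y [ZMOD N]) (hx : x ∈ Set.Icc 1 N)
    (hy : y ∈ Set.Icc 1 N) : x = y := by
  have := Int.eq_zero_of_abs_lt_dvd h.dvd (by rw [abs_lt]; grind)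
  omega

lemma orbit_pair (hx : x ∈ Set.Icc 1 (p + m : ℤ)) :
    orbit [p, m] x = residueClass (p + m) (Nat.gcd p m) x := by
  have hgcd : Int.gcd m (p + m) = Nat.gcd p m := by
    rw [Int.gcd_add_self_right, Int.gcd_comm, Int.gcd_natCast_natCast]
  have hmaps := mapsTo_Texch_pair p m
  have hN : (p + m : ℤ) ≠ 0 := (one_pos.trans_le (hx.1.trans hx.2)).ne'
  have hclass (y : ℤ) : (∃ k : ℕ, y ≡ x + k * m [ZMOD p + m]) ↔ y ≡ x [ZMOD Nat.gcd p m] :=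
    hgcd ▸ exists_modEq_add_natCast_mul_iff hN m x y
  ext y
  constructor
  · rintro ⟨k, rfl⟩
    exact ⟨by exact_mod_cast hmaps.iterate k hx,
      (hclass _).mp ⟨k, iterate_Texch_pair_modEq hx k⟩⟩
  · rintro ⟨hy, hyx⟩
    obtain ⟨k, hk⟩ := (hclass y).mpr hyx
    exact ⟨k, eq_of_modEq_of_mem_Icc ((iterate_Texch_pair_modEq hx k).trans hk.symm)
      (hmaps.iterate k hx) (by exact_mod_cast hy)⟩

end Rotation

section Triple

lemma isFirstReturnMap_Texch_triple (a b c : ℕ) :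
    IsFirstReturnMap (Texch [a + b, b + c]) (Texch [a, b, c]) (Set.Icc 1 (a + b + c)) := by
  rintro x ⟨hx_pos, hx_le⟩
  obtain hxa | hax := le_or_gt x a
  · rw [Texch_triple_left ⟨by omega, hxa⟩]
    refine ⟨⟨by omega, by omega⟩, 1, one_pos, ?_, by omega⟩
    rw [Function.iterate_one, Texch_pair_left ⟨by omega, by omega⟩, Nat.cast_add]
  obtain hxb | hbx := le_or_gt x (a + b)
  · have hR : Texch [a + b, b + c] x = x + (b + c) := by
      rw [Texch_pair_left ⟨by omega, by omega⟩, Nat.cast_add]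
    rw [Texch_triple_middle ⟨hax, hxb⟩]
    refine ⟨⟨by omega, by omega⟩, 2, two_pos, ?_, fun i hi_pos hi_lt => ?_⟩
    · rw [Function.iterate_succ_apply, Function.iterate_one, hR,
        Texch_pair_right ⟨by omega, by omega⟩]
      push_cast
      ring
    · obtain rfl : i = 1 := by omega
      rw [Function.iterate_one, hR]
      exact fun h => absurd h.2 (by omega)
  · rw [Texch_triple_right ⟨hbx, hx_le⟩]
    refine ⟨⟨by omega, by omega⟩, 1, one_pos, ?_, by omega⟩
    rw [Function.iterate_one, Texch_pair_right ⟨by omega, by omega⟩, Nat.cast_add]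

lemma orbit_triple {a b c : ℕ} {x : ℤ} (hx : x ∈ Set.Icc 1 (a + b + c : ℤ)) :
    orbit [a, b, c] x = residueClass (a + b + c) (Nat.gcd (a + b) (b + c)) x := by
  have hx' : x ∈ Set.Icc 1 ((a + b : ℕ) + (b + c : ℕ) : ℤ) :=
    ⟨hx.1, hx.2.trans (by push_cast; omega)⟩
  have hreturn : orbit [a, b, c] x = orbit [a + b, b + c] x ∩ Set.Icc 1 (a + b + c) :=
    (isFirstReturnMap_Texch_triple a b c).range_iterate_eq hx
  rw [hreturn, orbit_pair hx']
  ext y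
  simp only [residueClass, Set.mem_inter_iff, Set.mem_ofPred_eq, Set.mem_Icc, Nat.cast_add]
  grind

lemma orbitsSet_triple (a b c : ℕ) :
    orbitsSet [a, b, c] = residueClasses (a + b + c) (Nat.gcd (a + b) (b + c)) := by
  have hmem (x : ℤ) : x ∈ Set.Icc 1 ((a + b + c : ℕ) : ℤ) ↔
      1 ≤ x ∧ x ≤ ([a, b, c].sum : ℤ) := by
    simp [add_assoc]
  ext S
  constructor
  · rintro ⟨x, hx_pos, hx_le, rfl⟩
    have hx := (hmem x).mpr ⟨hx_pos, hx_le⟩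
    exact ⟨x, hx, (orbit_triple (by exact_mod_cast hx)).symm⟩
  · rintro ⟨x, hx, rfl⟩
    obtain ⟨hx_pos, hx_le⟩ := (hmem x).mp hx
    exact ⟨x, hx_pos, hx_le, (orbit_triple (by exact_mod_cast hx)).symm⟩

end Triple

/-- Corollary 5.4: with `d = gcd(λ₁+λ₂, λ₂+λ₃)` and `n = qd + r`
(`0 ≤ r < d`), `T_{(λ₁,λ₂,λ₃)}` has exactly `d` orbits, of which exactly `r` have
cardinality `q+1` and the remaining `d - r` have cardinality `q`; in particular it is
minimal iff `d = 1`. -/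
theorem cyclicType_triple (a b c : ℕ) (ha : 0 < a) (hb : 0 < b) (hc : 0 < c)
    (n d q r : ℕ) (hn : n = a + b + c) (hd : d = Nat.gcd (a + b) (b + c))
    (hq : q = n / d) (hr : r = n % d) :
    numOrbits [a, b, c] = d ∧
      {S ∈ orbitsSet [a, b, c] | S.ncard = q + 1}.ncard = r ∧
      {S ∈ orbitsSet [a, b, c] | S.ncard = q}.ncard = d - r ∧
      (numOrbits [a, b, c] = 1 ↔ d = 1) := by
  have hd_pos : 0 < d := hd ▸ Nat.gcd_pos_of_pos_left _ (by omega)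
  have hd_le : d ≤ n := by
    have : d ≤ a + b := hd ▸ Nat.gcd_le_left _ (by omega)
    omega
  have horbits : orbitsSet [a, b, c] = residueClasses n d := by
    rw [orbitsSet_triple, hn, hd]
  have hnum : numOrbits [a, b, c] = d := by
    rw [numOrbits, horbits, ncard_residueClasses hd_pos hd_le]
  subst hq hr
  rw [hnum, horbits]
  exact ⟨rfl, ncard_residueClasses_succ_div hd_pos hd_le,
    ncard_residueClasses_div hd_pos hd_le, Iff.rfl⟩
end
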